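/- arXiv:2107.06977 — 2 statements merged into one kernel-verified Lean document; each statement's English description precedes it below -/
import Mathlib

section
/- Let q ≥ 2 and n be positive integers, let ξ_1, …, ξ_n be independent random variables each equal to 0 or 1 with probability 1/2, and let a ∈ Z_q. Then |P[ξ_1 + ⋯ + ξ_n ≡ a (mod q)] − 1/q| ≤ ((q−1)/q)·e^{−2n/q²}. -/
/-!
The bound comes from Fourier inversion on `ℤ/q`. Writing `e` for the standard additive character,
orthogonality and the factorisation `∑ₓ ∏ᵢ e(k xᵢ) = (1 + e(k))ⁿ` over `{0,1}ⁿ` give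
`q · #{x | ∑ xᵢ = a} = ∑ₖ e(-ka) (1 + e(k))ⁿ` (`card_mul_eq_sum_char`). The term `k = 0` is `2ⁿ`,
which produces the main term `1/q`. For each of the `q - 1` other frequencies
`|1 + e(k)| = 2 |cos (πk/q)|`, and Jordan's inequality `sin (πk/q) ≥ 2/q` yields
`cos² (πk/q) ≤ 1 - 4/q² ≤ exp (-4/q²)`, hence `|1 + e(k)| ≤ 2 exp (-2/q²)`
(`norm_one_add_stdAddChar_le`).
-/

open Finset

open scoped Classical

lemma two_div_le_sin (q v : ℕ) (h0 : 0 < v) (hv : v < q) :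
    2 / (q : ℝ) ≤ Real.sin (Real.pi * v / q) := by
  have hq : (0 : ℝ) < q := by exact_mod_cast h0.trans hv
  -- Jordan's inequality covers the first half of the range; `sin (π - θ) = sin θ` the rest.
  have key : ∀ w : ℕ, 0 < w → 2 * w ≤ q → 2 / (q : ℝ) ≤ Real.sin (Real.pi * w / q) := by
    intro w hw0 hw
    have hw1 : (1 : ℝ) ≤ w := by exact_mod_cast hw0
    have hw' : 2 * (w : ℝ) ≤ q := by exact_mod_cast hw
    have h := Real.mul_le_sin (x := Real.pi * w / q) (by positivity) (by
      rw [div_le_div_iff₀ hq two_pos]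
      nlinarith [Real.pi_pos])
    refine le_trans ?_ h
    have e : 2 / Real.pi * (Real.pi * w / q) = 2 * w / q := by
      field_simp
    rw [e]
    gcongr
    linarith
  rcases le_total (2 * v) q with h | h
  · exact key v h0 h
  · have := key (q - v) (by omega) (by omega)
    rw [Nat.cast_sub hv.le] at this
    rw [← Real.sin_pi_sub]
    convert this using 2
    field_simp

lemma abs_cos_le_exp (q v : ℕ) (h0 : 0 < v) (hv : v < q) :
    |Real.cos (Real.pi * v / q)| ≤ Real.exp (-2 / (q : ℝ) ^ 2) := by
  have hs := two_div_le_sin q v h0 hv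
  have h4 : (2 / (q : ℝ)) ^ 2 ≤ Real.sin (Real.pi * v / q) ^ 2 := by gcongr
  refine abs_le_of_sq_le_sq ?_ (Real.exp_pos _).le
  rw [← Real.exp_nat_mul, Real.cos_sq']
  have h := Real.add_one_le_exp (((2 : ℕ) : ℝ) * (-2 / (q : ℝ) ^ 2))
  have e : ((2 : ℕ) : ℝ) * (-2 / (q : ℝ) ^ 2) = -(2 / (q : ℝ)) ^ 2 := by
    push_cast
    ring
  rw [e] at h ⊢
  linarith

lemma norm_one_add_stdAddChar_le (q : ℕ) [NeZero q] (k : ZMod q) (hk : k ≠ 0) :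
    ‖1 + ZMod.stdAddChar k‖ ≤ 2 * Real.exp (-2 / (q : ℝ) ^ 2) := by
  have h0 : 0 < k.val := Nat.pos_of_ne_zero (by simpa using hk)
  have hb := abs_cos_le_exp q k.val h0 (ZMod.val_lt k)
  set θ : ℝ := Real.pi * k.val / q with hθ
  have e1 : ZMod.stdAddChar k = Complex.exp (θ * Complex.I) * Complex.exp (θ * Complex.I) := by
    rw [ZMod.stdAddChar_apply, ZMod.toCircle_apply, ← Complex.exp_add, hθ]
    congr 1
    push_cast
    ring
  have e2 : 1 + ZMod.stdAddChar k
      = Complex.exp (θ * Complex.I) * ((2 * Real.cos θ : ℝ) : ℂ) := by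
    rw [e1]
    push_cast
    rw [Complex.two_cos, mul_add, ← Complex.exp_add (_ * _) (-_ * _)]
    simp [add_comm]
  rw [e2, norm_mul, Complex.norm_exp_ofReal_mul_I, one_mul, Complex.norm_real, Real.norm_eq_abs,
    abs_mul, abs_two]
  gcongr

/-- Fourier inversion for the number of points of `{0,1}ⁿ` whose coordinate sum is `a` mod `q`. -/
lemma card_mul_eq_sum_char (q n : ℕ) [NeZero q] (a : ZMod q) :
    (q : ℂ) * ((Finset.univ.filter fun x : Fin n → Fin 2 =>
          (∑ i, ((x i : ℕ) : ZMod q)) = a).card : ℂ)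
      = ∑ k : ZMod q, ZMod.stdAddChar (-(k * a)) * (1 + ZMod.stdAddChar k) ^ n := by
  have e1 : ∀ k : ZMod q, (1 + ZMod.stdAddChar k : ℂ) ^ n
      = ∑ x : Fin n → Fin 2, ZMod.stdAddChar (k * ∑ i, ((x i : ℕ) : ZMod q)) := by
    intro k
    have h := Fintype.sum_pow (fun b : Fin 2 => (ZMod.stdAddChar (k * ((b : ℕ) : ZMod q)) : ℂ)) n
    simp only [Fin.sum_univ_two, Fin.val_zero, Fin.val_one, Nat.cast_zero, Nat.cast_one, mul_zero,
      mul_one, AddChar.map_zero_eq_one] at h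
    rw [h]
    refine Finset.sum_congr rfl fun x _ => ?_
    rw [Finset.mul_sum]
    exact (map_prod (ZMod.stdAddChar (N := q)).toMonoidHom
      (fun i => Multiplicative.ofAdd (k * ((x i : ℕ) : ZMod q))) Finset.univ).symm
  simp_rw [e1, Finset.mul_sum (Finset.univ : Finset (Fin n → Fin 2))]
  rw [Finset.sum_comm, Finset.card_filter]
  push_cast
  rw [Finset.mul_sum]
  refine Finset.sum_congr rfl fun x _ => ?_
  have h := AddChar.sum_mulShift (∑ i, ((x i : ℕ) : ZMod q) - a)
    (ZMod.isPrimitive_stdAddChar q)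
  rw [ZMod.card] at h
  simp_rw [← AddChar.map_add_eq_mul]
  have e2 : ∀ k s : ZMod q, -(k * a) + k * s = k * (s - a) := fun k s => by ring
  simp_rw [e2]
  rw [h]
  by_cases hx : ∑ i, ((x i : ℕ) : ZMod q) = a <;> simp [hx, sub_eq_zero]

/-- Let `q ≥ 2`, `n ≥ 1`, let `ξ_1, …, ξ_n` be iid `Bern(1/2)`
random variables (encoded as a uniformly random element of `{0,1}^n`), and let
`a ∈ Z_q`.  Then `|P[ξ_1 + ⋯ + ξ_n ≡ a (mod q)] − 1/q| ≤ ((q−1)/q) e^{−2n/q²}`. -/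
theorem bernoulli_sum_mod_q_uniform (q n : ℕ) (hq : 2 ≤ q) (hn : 0 < n)
    (a : ZMod q) :
    |((Finset.univ.filter fun x : Fin n → Fin 2 =>
          (∑ i, ((x i : ℕ) : ZMod q)) = a).card : ℝ) / 2 ^ n - 1 / q|
      ≤ ((q : ℝ) - 1) / q * Real.exp (-2 * n / (q : ℝ) ^ 2) := by
  have : NeZero q := ⟨by omega⟩
  have hq0 : (0 : ℝ) < q := by exact_mod_cast (by omega : 0 < q)
  have h := card_mul_eq_sum_char q n a
  set N := (Finset.univ.filter fun x : Fin n → Fin 2 =>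
          (∑ i, ((x i : ℕ) : ZMod q)) = a).card
  -- Separate the trivial frequency, whose contribution is `2 ^ n`.
  rw [← Finset.add_sum_erase _ _ (Finset.mem_univ (0 : ZMod q))] at h
  simp only [zero_mul, neg_zero, AddChar.map_zero_eq_one, one_mul, one_add_one_eq_two] at h
  have hb : |(q : ℝ) * N - 2 ^ n| ≤ (q - 1) * (2 ^ n * Real.exp (-2 * n / (q : ℝ) ^ 2)) := by
    have e : |(q : ℝ) * N - 2 ^ n| = ‖(q : ℂ) * N - 2 ^ n‖ := by
      rw [← Real.norm_eq_abs, ← Complex.norm_real]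
      push_cast
      rfl
    rw [e, h, add_sub_cancel_left]
    refine (norm_sum_le_of_le (f := _) _
      (n := fun _ => 2 ^ n * Real.exp (-2 * n / (q : ℝ) ^ 2)) ?_).trans ?_
    · intro k hk
      rw [norm_mul, AddChar.norm_apply, one_mul, norm_pow]
      calc _ ≤ (2 * Real.exp (-2 / (q : ℝ) ^ 2)) ^ n := by
            gcongr
            exact norm_one_add_stdAddChar_le q k (Finset.ne_of_mem_erase hk)
        _ = _ := by
            rw [mul_pow, ← Real.exp_nat_mul]
            congr 2
            ring
    · rw [Finset.sum_const, Finset.card_erase_of_mem (Finset.mem_univ _), Finset.card_univ,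
        ZMod.card, nsmul_eq_mul, Nat.cast_sub (by omega), Nat.cast_one]
  have e : (N : ℝ) / 2 ^ n - 1 / q = (q * N - 2 ^ n) / (q * 2 ^ n) := by
    field_simp
  rw [e, abs_div, abs_of_pos (by positivity : (0 : ℝ) < q * 2 ^ n), div_le_iff₀ (by positivity)]
  refine hb.trans_eq ?_
  field_simp
end

section
/- Fix an integer q ≥ 3 and set t = q+1. There exist ε > 0 (depending only on q) and n_0 such that for all n ≥ n_0, the number of ordered pairs (U, V) of balanced ordered partitions of {1,…,n} into t parts for which |U_i ∩ V_j| > n/(3t) for some i, j is at most M(n,t)²·e^{−εn}, where M(n,t) is the total number of balanced ordered partitions of {1,…,n} into t parts. -/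
/-!
Identify a balanced partition into `t = q + 1` parts with its labelling `Fin n → Fin t`. Two
estimates on labellings give the result.

* `pow_le_mul_Mcount`: balanced labellings make up at least a fraction `(n + 1)⁻ᵗ` of all
  `tⁿ` labellings. By the multinomial theorem `tⁿ` is a sum of at most `(n + 1)ᵗ` multinomial
  coefficients; the balanced one is the largest (`prod_factorial_ge`), and it is a lower
  bound for `Mcount n t` (`factorial_le_Mcount_mul`).
* `card_large_fiber_le`: a Chernoff bound. A pair of labellings is a word of length `n` over
  `Fin t × Fin t`, and the generating function of the number of occurrences of a letter is
  `(t² - 1 + e^s)ⁿ`. Taking `e^s = 7/6` shows that the words in which a given letter occurs more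
  than `n / (3t)` times number at most `t²ⁿ e^{-δn}` with `δ = s / (3t) - 1 / (6t²)`, which is
  positive since `t ≥ 4`.

The resulting polynomial factor `t² (n + 1)²ᵗ` is absorbed by halving `δ`.
-/

open Finset

open scoped Classical

/-- A balanced ordered partition of `Fin n` into `t` parts: pairwise disjoint
sets covering `Fin n`, each of size `⌊n/t⌋` or `⌈n/t⌉`. -/
def BalancedPartition {n t : ℕ} (P : Fin t → Finset (Fin n)) : Prop :=
  (∀ v : Fin n, ∃! i, v ∈ P i) ∧
  ∀ i, (P i).card = n / t ∨ (P i).card = (n + t - 1) / t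

/-- `M(n,t)`: the number of balanced ordered partitions of `Fin n` into `t`
parts. -/
noncomputable def Mcount (n t : ℕ) : ℕ :=
  (Finset.univ.filter fun P : Fin t → Finset (Fin n) => BalancedPartition P).card

/-- The ordered partition of `Fin n` into the fibres of a labelling `f`. -/
def fiberPart {n t : ℕ} (f : Fin n → Fin t) (i : Fin t) : Finset (Fin n) :=
  Finset.univ.filter fun v => f v = i

lemma fiberPart_injective {n t : ℕ} :
    Function.Injective (fiberPart : (Fin n → Fin t) → Fin t → Finset (Fin n)) := by
  intro f g h
  funext v
  have h1 : v ∈ fiberPart g (f v) := by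
    rw [← h]; simp [fiberPart]
  simpa [fiberPart, eq_comm] using h1

lemma exists_fiberPart_eq {n t : ℕ} {P : Fin t → Finset (Fin n)} (hP : BalancedPartition P) :
    ∃ f, fiberPart f = P := by
  choose f hf hf' using hP.1
  refine ⟨f, ?_⟩
  funext i
  ext v
  simp only [fiberPart, Finset.mem_filter, Finset.mem_univ, true_and]
  exact ⟨fun h => h ▸ hf v, fun h => (hf' v i h).symm⟩

/-- The part sizes of a particular balanced partition: the first `n % t` parts are the large
ones. -/
def balSize (n t : ℕ) (i : Fin t) : ℕ := n / t + if i.val < n % t then 1 else 0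

lemma sum_balExtra {n t : ℕ} (ht : 0 < t) :
    ∑ i : Fin t, (if i.val < n % t then 1 else 0) = n % t := by
  have h := Nat.mod_lt n ht
  rw [Fin.sum_univ_eq_sum_range (fun i => if i < n % t then 1 else 0) t, Finset.sum_boole]
  have : (Finset.range t).filter (fun i => i < n % t) = Finset.range (n % t) := by
    ext x; simp; omega
  simp [this]

lemma sum_balSize {n t : ℕ} (ht : 0 < t) : ∑ i : Fin t, balSize n t i = n := by
  simp only [balSize, Finset.sum_add_distrib, sum_balExtra ht]
  simpa using Nat.div_add_mod n t

lemma balSize_eq {n t : ℕ} (ht : 0 < t) (i : Fin t) :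
    balSize n t i = n / t ∨ balSize n t i = (n + t - 1) / t := by
  unfold balSize
  split_ifs with h
  · right
    have h1 : n + t - 1 = (n % t - 1) + t * (n / t + 1) := by
      have := Nat.div_add_mod n t
      rw [mul_add, mul_one]; omega
    have h2 : (n % t - 1) / t = 0 := Nat.div_eq_of_lt (by have := Nat.mod_lt n ht; omega)
    rw [h1, Nat.add_mul_div_left _ _ ht, h2, zero_add]
  · left; rfl

lemma exists_balanced_fun {n t : ℕ} (ht : 0 < t) :
    ∃ f : Fin n → Fin t, ∀ i, (fiberPart f i).card = balSize n t i := by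
  have e : Fin n ≃ Σ i : Fin t, Fin (balSize n t i) :=
    Fintype.equivOfCardEq (by simp [sum_balSize ht])
  refine ⟨fun v => (e v).1, fun i => ?_⟩
  rw [← Fintype.card_fin (balSize n t i), fiberPart, ← Fintype.card_subtype]
  refine Fintype.card_congr ((e.subtypeEquiv (q := fun x => x.1 = i) fun a => Iff.rfl).trans ?_)
  exact Equiv.sigmaSubtype i

/-- Permutations `σ` act on labellings by precomposition; the orbit of one balanced labelling
consists of balanced labellings, and its stabilizer has order `∏ i, (balSize n t i)!`. -/
lemma factorial_le_Mcount_mul {n t : ℕ} (ht : 0 < t) :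
    n.factorial ≤ (∏ i : Fin t, (balSize n t i).factorial) * Mcount n t := by
  obtain ⟨f, hf⟩ := exists_balanced_fun (n := n) ht
  have hst : (Finset.univ.filter fun σ : Equiv.Perm (Fin n) => f ∘ σ = f).card
      = ∏ i : Fin t, (balSize n t i).factorial := by
    rw [← Fintype.card_subtype]
    convert DomMulAct.stabilizer_card f using 2 with i
    rw [← hf i, fiberPart, Fintype.card_subtype]
  have key := Finset.card_le_mul_card_image_of_maps_to
    (s := (Finset.univ : Finset (Equiv.Perm (Fin n))))
    (t := Finset.univ.filter fun P : Fin t → Finset (Fin n) => BalancedPartition P)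
    (f := fun σ : Equiv.Perm (Fin n) => fiberPart (f ∘ σ)) ?_ (∏ i : Fin t, (balSize n t i).factorial) ?_
  · simpa [Fintype.card_perm, Mcount] using key
  · intro σ _
    simp only [Finset.mem_filter, Finset.mem_univ, true_and]
    refine ⟨fun v => ⟨f (σ v), by simp [fiberPart], by simp [fiberPart]⟩, fun i => ?_⟩
    have : (fiberPart (f ∘ σ) i).card = (fiberPart f i).card := by
      refine Finset.card_bij (fun v _ => σ v) (by simp [fiberPart]) (by simp) ?_
      intro b hb
      exact ⟨σ.symm b, by simpa [fiberPart] using hb, by simp⟩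
    rw [this, hf i]
    exact balSize_eq ht i
  · intro P _
    rw [← hst]
    rcases (Finset.univ.filter fun σ : Equiv.Perm (Fin n) =>
      fiberPart (f ∘ σ) = P).eq_empty_or_nonempty with h | ⟨σ₀, h0⟩
    · simp [h]
    · refine Finset.card_le_card_of_injOn (fun σ => σ * σ₀⁻¹) ?_ ?_
      · intro σ hσ
        simp only [Finset.coe_filter, Finset.mem_filter, Finset.mem_univ, true_and,
          Set.mem_ofPred_eq] at h0 hσ ⊢
        have h1 : f ∘ σ = f ∘ σ₀ := fiberPart_injective (hσ.trans h0.symm)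
        funext v
        have := congrFun h1 (σ₀⁻¹ v)
        simpa using this
      · intro a _ b _ hab
        exact mul_right_cancel hab

lemma factorial_mul_pow_le (m k : ℕ) :
    m.factorial * (m + 1) ^ k ≤ k.factorial * (m + 1) ^ m := by
  rcases le_total m k with h | h
  · obtain ⟨d, rfl⟩ := Nat.exists_eq_add_of_le h
    calc m.factorial * (m + 1) ^ (m + d) = (m.factorial * (m + 1) ^ d) * (m + 1) ^ m := by ring
      _ ≤ _ := Nat.mul_le_mul_right _ Nat.factorial_mul_pow_le_factorial
  · obtain ⟨d, rfl⟩ := Nat.exists_eq_add_of_le h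
    calc (k + d).factorial * (k + d + 1) ^ k
        ≤ (k.factorial * (k + d + 1) ^ d) * (k + d + 1) ^ k := by
          refine Nat.mul_le_mul_right _ ?_
          rw [← Nat.factorial_mul_ascFactorial]
          exact Nat.mul_le_mul_left _ ((Nat.ascFactorial_le_pow_add k d).trans
            (Nat.pow_le_pow_left (Nat.le_succ _) d))
      _ = _ := by ring

/-- Among all size vectors with sum `n`, the balanced one minimises the product of factorials. -/
lemma prod_factorial_ge {n t : ℕ} (ht : 0 < t) (k : Fin t → ℕ) (hk : ∑ i, k i = n) :
    ∏ i : Fin t, (balSize n t i).factorial ≤ ∏ i, (k i).factorial := by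
  set m := n / t with hm
  have h1 : ∏ i : Fin t, (balSize n t i).factorial = m.factorial ^ t * (m + 1) ^ (n % t) := by
    have : ∀ i : Fin t, (balSize n t i).factorial
        = m.factorial * (m + 1) ^ (if i.val < n % t then 1 else 0) := by
      intro i
      unfold balSize
      split_ifs
      · rw [Nat.factorial_succ, ← hm]; ring
      · simp [hm]
    rw [Finset.prod_congr rfl fun i _ => this i, Finset.prod_mul_distrib,
      Finset.prod_pow_eq_pow_sum, sum_balExtra ht]
    simp
  have h2 : ∏ i, (m.factorial * (m + 1) ^ k i) ≤ ∏ i, ((k i).factorial * (m + 1) ^ m) :=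
    Finset.prod_le_prod' fun i _ => factorial_mul_pow_le m (k i)
  rw [Finset.prod_mul_distrib, Finset.prod_mul_distrib, Finset.prod_pow_eq_pow_sum, hk] at h2
  simp only [Finset.prod_const, Finset.card_univ, Fintype.card_fin] at h2
  rw [h1]
  have h3 : n = n % t + m * t := by
    have := Nat.div_add_mod n t
    rw [hm, mul_comm]; omega
  refine Nat.le_of_mul_le_mul_right (c := ((m + 1) ^ m) ^ t) ?_ (by positivity)
  calc _ = m.factorial ^ t * (m + 1) ^ (n % t + m * t) := by ring
    _ ≤ _ := by rw [← h3]; exact h2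

lemma pow_le_mul_Mcount {n t : ℕ} (ht : 0 < t) : t ^ n ≤ (n + 1) ^ t * Mcount n t := by
  have h1 := Finset.sum_pow_eq_sum_piAntidiag (R := ℕ) (Finset.univ : Finset (Fin t))
    (fun _ => 1) n
  simp only [Finset.sum_const, Finset.card_univ, Fintype.card_fin, smul_eq_mul, mul_one, one_pow,
    Finset.prod_const_one, Nat.cast_id] at h1
  rw [h1]
  have h2 : ((Finset.univ : Finset (Fin t)).piAntidiag n).card ≤ (n + 1) ^ t := by
    calc _ ≤ (Fintype.piFinset fun _ : Fin t => Finset.range (n + 1)).card := by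
          refine Finset.card_le_card fun k hk => ?_
          rw [Finset.mem_piAntidiag] at hk
          rw [Fintype.mem_piFinset]
          intro i
          rw [Finset.mem_range, Nat.lt_succ_iff, ← hk.1]
          exact Finset.single_le_sum (fun _ _ => Nat.zero_le _) (Finset.mem_univ i)
      _ = _ := by simp
  refine (Finset.sum_le_card_nsmul _ _ (Mcount n t) ?_).trans
    (by rw [smul_eq_mul]; exact Nat.mul_le_mul_right _ h2)
  intro k hk
  rw [Finset.mem_piAntidiag] at hk
  have h3 := Nat.multinomial_spec (Finset.univ : Finset (Fin t)) k
  rw [hk.1] at h3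
  refine le_of_mul_le_mul_left (a := ∏ i, (k i).factorial) ?_
    (Finset.prod_pos fun i _ => Nat.factorial_pos _)
  rw [h3]
  exact (factorial_le_Mcount_mul ht).trans
    (Nat.mul_le_mul_right _ (prod_factorial_ge ht k hk.1))

/-- Chernoff bound for the number of words `h` in which the letter `a` occurs more than `x`
times. -/
lemma card_large_fiber_le {α : Type} [Fintype α] [DecidableEq α] (n : ℕ) (a : α) (s x : ℝ) (hs : 0 ≤ s) :
    ((Finset.univ.filter fun h : Fin n → α =>
        x < ((Finset.univ.filter fun v => h v = a).card : ℝ)).card : ℝ) * Real.exp (s * x)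
      ≤ ((Fintype.card α : ℝ) + (Real.exp s - 1)) ^ n := by
  have hgen : ∑ h : Fin n → α, Real.exp (s * ((Finset.univ.filter fun v => h v = a).card : ℝ))
      = ((Fintype.card α : ℝ) + (Real.exp s - 1)) ^ n := by
    have h1 : ∑ b : α, Real.exp (if b = a then s else 0)
        = (Fintype.card α : ℝ) + (Real.exp s - 1) := by
      have : ∀ b : α, Real.exp (if b = a then s else 0)
          = 1 + if b = a then Real.exp s - 1 else 0 := by
        intro b; split_ifs <;> simp
      simp [this, Finset.sum_add_distrib]
    rw [← h1, Fintype.sum_pow]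
    refine Finset.sum_congr rfl fun h _ => ?_
    rw [← Real.exp_sum, ← Finset.sum_filter, Finset.sum_const, nsmul_eq_mul, mul_comm]
  rw [← hgen, ← nsmul_eq_mul]
  refine (Finset.card_nsmul_le_sum _ _ _ fun h hh => ?_).trans
    (Finset.sum_le_sum_of_subset_of_nonneg (Finset.subset_univ _)
      fun _ _ _ => (Real.exp_pos _).le)
  exact Real.exp_le_exp.2 (mul_le_mul_of_nonneg_left (Finset.mem_filter.1 hh).2.le hs)

/-- Fix `q ≥ 3` and `t = q + 1`.  There is `ε > 0` (depending
only on `q`) such that for all large `n`, the number of ordered pairs `(U, V)`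
of balanced ordered partitions of `{1,…,n}` into `t` parts with
`|U_i ∩ V_j| > n/(3t)` for some `i, j` is at most `M(n,t)² e^{−εn}`. -/
theorem few_atypical_pairs (q : ℕ) (hq : 3 ≤ q) :
    ∃ ε : ℝ, 0 < ε ∧ ∃ n₀ : ℕ, ∀ n : ℕ, n₀ ≤ n →
      (((Finset.univ.filter fun UV :
            (Fin (q + 1) → Finset (Fin n)) × (Fin (q + 1) → Finset (Fin n)) =>
          BalancedPartition UV.1 ∧ BalancedPartition UV.2 ∧
            ∃ i j, (n : ℝ) / (3 * (q + 1)) < ((UV.1 i ∩ UV.2 j).card : ℝ)).card : ℝ)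
        ≤ (Mcount n (q + 1) : ℝ) ^ 2 * Real.exp (-ε * n)) := by
  obtain ⟨T, hT⟩ : ∃ T : ℝ, T = (q : ℝ) + 1 := ⟨_, rfl⟩
  have hT4 : 4 ≤ T := by
    have : (3 : ℝ) ≤ q := by exact_mod_cast hq
    linarith
  set s := Real.log (7 / 6) with hs
  have hexp : Real.exp s = 7 / 6 := Real.exp_log (by norm_num)
  have hs7 : 1 / 7 ≤ s := by
    have := Real.one_sub_inv_le_log_of_pos (x := 7 / 6) (by norm_num)
    norm_num at this ⊢
    linarith
  set δ := s / (3 * T) - 1 / (6 * T ^ 2) with hδ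
  have hδ0 : 0 < δ := by
    have h1 : 1 / 7 / (3 * T) ≤ s / (3 * T) := by gcongr
    have h2 : 1 / (6 * T ^ 2) < 1 / 7 / (3 * T) := by
      rw [div_div, div_lt_div_iff₀ (by positivity) (by positivity)]
      nlinarith
    linarith
  -- Half of the exponential gain pays for the polynomial factor `T² (n + 1)²ᵗ`.
  have hpoly : ∀ᶠ n : ℕ in Filter.atTop,
      T ^ 2 * (((n : ℝ) + 1) ^ (q + 1)) ^ 2 ≤ Real.exp (δ / 2 * n) := by
    have h1 := (isLittleO_pow_exp_pos_mul_atTop (2 * (q + 1)) (half_pos hδ0)).bound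
      (c := 1 / (T ^ 2 * Real.exp (δ / 2))) (by positivity)
    have h2 : Filter.Tendsto (fun n : ℕ => (n : ℝ) + 1) Filter.atTop Filter.atTop :=
      Filter.tendsto_atTop_add_const_right _ _ tendsto_natCast_atTop_atTop
    filter_upwards [h2.eventually h1] with n hn
    rw [Real.norm_of_nonneg (by positivity), Real.norm_of_nonneg (by positivity),
      show δ / 2 * ((n : ℝ) + 1) = δ / 2 * n + δ / 2 by ring, Real.exp_add] at hn
    calc T ^ 2 * (((n : ℝ) + 1) ^ (q + 1)) ^ 2 = T ^ 2 * ((n : ℝ) + 1) ^ (2 * (q + 1)) := by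
          ring
      _ ≤ T ^ 2 * (1 / (T ^ 2 * Real.exp (δ / 2)) *
          (Real.exp (δ / 2 * n) * Real.exp (δ / 2))) := by gcongr
      _ = _ := by field_simp
  obtain ⟨n₀, hn₀⟩ := Filter.eventually_atTop.1 hpoly
  refine ⟨δ / 2, half_pos hδ0, n₀, fun n hn => ?_⟩
  have hpol := hn₀ n hn
  rw [← hT]
  set W : Fin (q + 1) × Fin (q + 1) → Finset (Fin n → Fin (q + 1) × Fin (q + 1)) := fun a =>
    Finset.univ.filter fun h =>
      (n : ℝ) / (3 * T) < ((Finset.univ.filter fun v => h v = a).card : ℝ) with hW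
  have hWle : ∀ a, ((W a).card : ℝ) ≤ (T ^ n) ^ 2 * Real.exp (-δ * n) := by
    intro a
    have h1 := card_large_fiber_le n a s ((n : ℝ) / (3 * T)) (by linarith)
    have h2 : ((Fintype.card (Fin (q + 1) × Fin (q + 1)) : ℝ) + (Real.exp s - 1)) ^ n
        ≤ (T ^ n) ^ 2 * Real.exp (1 / (6 * T ^ 2) * n) := by
      have h3 : ((Fintype.card (Fin (q + 1) × Fin (q + 1)) : ℝ) + (Real.exp s - 1))
          ≤ T ^ 2 * Real.exp (1 / (6 * T ^ 2)) := by
        have h4 := Real.add_one_le_exp (1 / (6 * T ^ 2))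
        calc _ = T ^ 2 * (1 / (6 * T ^ 2) + 1) := by
              rw [hexp]; simp [← hT]; field_simp; ring
          _ ≤ _ := by gcongr
      calc _ ≤ (T ^ 2 * Real.exp (1 / (6 * T ^ 2))) ^ n :=
            pow_le_pow_left₀ (by rw [hexp]; positivity) h3 n
        _ = _ := by rw [mul_pow, ← Real.exp_nat_mul, mul_comm (n : ℝ)]; ring
    have h5 := h1.trans h2
    rw [← le_div_iff₀ (Real.exp_pos _), mul_div_assoc, ← Real.exp_sub] at h5
    have h6 : -δ * n = 1 / (6 * T ^ 2) * n - s * (n / (3 * T)) := by rw [hδ]; ring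
    rw [h6]
    exact h5
  have hsub : (Finset.univ.filter fun UV :
            (Fin (q + 1) → Finset (Fin n)) × (Fin (q + 1) → Finset (Fin n)) =>
          BalancedPartition UV.1 ∧ BalancedPartition UV.2 ∧
            ∃ i j, (n : ℝ) / (3 * T) < ((UV.1 i ∩ UV.2 j).card : ℝ)) ⊆
      Finset.univ.biUnion fun a => (W a).image fun h =>
        (fiberPart fun v => (h v).1, fiberPart fun v => (h v).2) := by
    rintro ⟨U, V⟩ hUV
    simp only [Finset.mem_filter, Finset.mem_univ, true_and] at hUV
    obtain ⟨hU, hV, i, j, hij⟩ := hUV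
    obtain ⟨f, rfl⟩ := exists_fiberPart_eq hU
    obtain ⟨g, rfl⟩ := exists_fiberPart_eq hV
    simp only [Finset.mem_biUnion, Finset.mem_univ, true_and, Finset.mem_image]
    refine ⟨(i, j), fun v => (f v, g v), ?_, rfl⟩
    simp only [hW, Finset.mem_filter, Finset.mem_univ, true_and, Prod.mk.injEq]
    simpa only [fiberPart, ← Finset.filter_and] using hij
  have hM : T ^ n ≤ ((n : ℝ) + 1) ^ (q + 1) * Mcount n (q + 1) := by
    rw [hT]
    exact_mod_cast pow_le_mul_Mcount (n := n) (Nat.succ_pos q)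
  have hcard : ∑ a, ((W a).card : ℝ) ≤ T ^ 2 * ((T ^ n) ^ 2 * Real.exp (-δ * n)) := by
    refine (Finset.sum_le_card_nsmul _ _ _ fun a _ => hWle a).trans_eq ?_
    simp [← hT, pow_two]
  calc _ ≤ ∑ a, ((W a).card : ℝ) := by
        exact_mod_cast (Finset.card_le_card hsub).trans
          (Finset.card_biUnion_le.trans (Finset.sum_le_sum fun a _ => Finset.card_image_le))
    _ ≤ T ^ 2 * ((T ^ n) ^ 2 * Real.exp (-δ * n)) := hcard
    _ ≤ T ^ 2 * ((((n : ℝ) + 1) ^ (q + 1) * Mcount n (q + 1)) ^ 2 * Real.exp (-δ * n)) := by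
        gcongr
    _ = (T ^ 2 * (((n : ℝ) + 1) ^ (q + 1)) ^ 2) *
          ((Mcount n (q + 1) : ℝ) ^ 2 * Real.exp (-δ * n)) := by ring
    _ ≤ Real.exp (δ / 2 * n) * ((Mcount n (q + 1) : ℝ) ^ 2 * Real.exp (-δ * n)) := by gcongr
    _ = (Mcount n (q + 1) : ℝ) ^ 2 * Real.exp (-(δ / 2) * n) := by
        rw [mul_left_comm, ← Real.exp_add]
        congr 2
        ring
end
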